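/- (Theorem of Papadakis–Petrotou for the simplex boundary, base determinant identity) Let A = (a_{i,j}) be the n×(n+1) matrix of indeterminates over 𝔽_2, X_j the maximal minor deleting column j, I = (i_1,…,i_n) and J a list of column indices with |J| odd. If there exists a vector L of column indices with X_I X_J = X_L² · X_0 X_1 ⋯ X_n, then ∂_I X_J = X_L², where ∂_I = ∂_{a_{1,i_1}} ∂_{a_{2,i_2}} ⋯ ∂_{a_{n,i_n}}; otherwise ∂_I X_J = 0. -/

import Mathlib

open MvPolynomial

/-- The generic `n × (n+1)` matrix of indeterminates over `𝔽₂`. -/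
noncomputable def genMat15 (n : ℕ) :
    Matrix (Fin n) (Fin (n + 1)) (MvPolynomial (Fin n × Fin (n + 1)) (ZMod 2)) :=
  fun i j => X (i, j)

/-- `Xdet15 n j`: the maximal minor of the generic matrix with column `j` deleted. -/
noncomputable def Xdet15 (n : ℕ) (j : Fin (n + 1)) :
    MvPolynomial (Fin n × Fin (n + 1)) (ZMod 2) :=
  ((genMat15 n).submatrix id j.succAbove).det

/-- Product of minors indexed by a multiset of column indices. -/
noncomputable def XProd15 (n : ℕ) (J : Multiset (Fin (n + 1))) :
    MvPolynomial (Fin n × Fin (n + 1)) (ZMod 2) :=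
  (J.map (Xdet15 n)).prod

/-- The iterated derivative `∂_I = ∂_{a_{1,i_1}} ⋯ ∂_{a_{n,i_n}}`: one formal partial
derivative from each row, in the column positions given by `I`. -/
noncomputable def pderivI15 (n : ℕ) (I : Fin n → Fin (n + 1))
    (f : MvPolynomial (Fin n × Fin (n + 1)) (ZMod 2)) :
    MvPolynomial (Fin n × Fin (n + 1)) (ZMod 2) :=
  (List.ofFn fun r : Fin n => ((r, I r) : Fin n × Fin (n + 1))).foldr
    (fun v g => pderiv v g) f

/-!
Write `a` for the matrix and `X_j` for its maximal minors. In characteristic two the rows of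
`(a_{r,j} X_j)` sum to zero, and all maximal minors of this matrix equal `P = X_0 ⋯ X_n`. Expanding
`∏_r ∑_j a_{r,j} X_j t_j = ∏_r ∑_j a_{r,j} X_j (1 + t_j)` in the group algebra of `(ℤ/2)^{n+1}`,
where `(1 + t_j)² = 0`, and comparing coefficients shows that
`P = ∑_I ∏_r a_{r,i_r} X_{i_r}`, the sum being over those `I` whose multiplicities have parities
opposite to those of `J`. For these `I` the product `X_I X_J` is `X_{L(I)}² P`, so multiplying by
`X_J` and cancelling `P` gives `X_J = ∑_I X_{L(I)}² ∏_r a_{r,i_r}`. Squares are constants for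
derivations in characteristic two, so `∂_I` picks out the single coefficient `X_{L(I)}²`.
Conversely, the multigrading `deg a_{i,j} = e_j` modulo 2 shows that `X_I X_J = X_L² P` forces the
parity condition on `I`.
-/

section SquareZeroExpansion

variable {R S : Type*}

theorem det_eq_permanent_of_charTwo {m : Type*} [DecidableEq m] [Fintype m] [CommRing R] [CharP R 2]
    (M : Matrix m m R) : M.det = M.permanent := by
  rw [Matrix.det_apply, Matrix.permanent]
  refine Finset.sum_congr rfl fun σ _ => ?_
  rcases Int.units_eq_one_or (Equiv.Perm.sign σ) with h | h <;> simp [h, CharTwo.neg_eq]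

variable [CommSemiring R] [CommSemiring S] [Algebra R S]

theorem prod_sum_smul_eq_sum_embedding {ι κ : Type*} [Fintype ι] [Fintype κ] [Fintype (ι ↪ κ)]
    (A : Matrix ι κ R) {u : κ → S} (hu : ∀ j, u j * u j = 0) :
    ∏ r, ∑ j, A r j • u j = ∑ f : ι ↪ κ, ∏ r, A r (f r) • u (f r) := by
  classical
  rw [Fintype.prod_sum]
  symm
  refine Fintype.sum_of_injective (fun f : ι ↪ κ => ⇑f) DFunLike.coe_injective _ _
    (fun I hI => ?_) fun _ => rfl
  have hninj : ¬ Function.Injective I := fun h => hI ⟨⟨I, h⟩, rfl⟩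
  obtain ⟨x, y, hxy, hne⟩ := Function.not_injective_iff.1 hninj
  have hdvd : u (I x) * u (I y) ∣ ∏ r, u (I r) := by
    rw [← Finset.prod_pair (f := fun r => u (I r)) hne]
    exact Finset.prod_dvd_prod_of_subset _ _ _ (Finset.subset_univ _)
  rw [hxy, hu, zero_dvd_iff] at hdvd
  rw [Finset.prod_smul, hdvd, smul_zero]

theorem sum_embedding_fin_succ {M : Type*} [AddCommMonoid M] {n : ℕ}
    (g : (Fin n ↪ Fin (n + 1)) → M) :
    ∑ f, g f = ∑ k : Fin (n + 1), ∑ σ : Equiv.Perm (Fin n),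
      g (σ.toEmbedding.trans k.succAboveEmb) := by
  rw [← Fintype.sum_prod_type']
  symm
  refine Function.Bijective.sum_comp (e := fun p : Fin (n + 1) × Equiv.Perm (Fin n) =>
    p.2.toEmbedding.trans p.1.succAboveEmb) ?_ g
  rw [Fintype.bijective_iff_injective_and_card]
  constructor
  · rintro ⟨k, σ⟩ ⟨l, τ⟩ h
    have hval (r : Fin n) : k.succAbove (σ r) = l.succAbove (τ r) := DFunLike.congr_fun h r
    obtain rfl : k = l := by
      by_contra hkl
      obtain ⟨i, hi⟩ := Fin.exists_succAbove_eq (Ne.symm hkl)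
      have := hval (σ.symm i)
      rw [Equiv.apply_symm_apply, hi] at this
      exact Fin.succAbove_ne _ _ this.symm
    exact Prod.ext rfl (Equiv.ext fun r => Fin.succAbove_right_injective (hval r))
  · simpa [Fintype.card_embedding_eq, Fintype.card_perm, Nat.factorial_succ] using
      (Nat.factorial_mul_descFactorial n.le_succ).symm

theorem prod_sum_smul_eq_sum_permanent {n : ℕ} (A : Matrix (Fin n) (Fin (n + 1)) R)
    {u : Fin (n + 1) → S} (hu : ∀ j, u j * u j = 0) :
    ∏ r, ∑ j, A r j • u j =
      ∑ k : Fin (n + 1), (A.submatrix id k.succAbove).permanent • ∏ i, u (k.succAbove i) := by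
  rw [prod_sum_smul_eq_sum_embedding A hu, sum_embedding_fin_succ]
  refine Finset.sum_congr rfl fun k _ => ?_
  rw [← Matrix.permanent_transpose, Matrix.permanent, Finset.sum_smul]
  refine Finset.sum_congr rfl fun σ _ => ?_
  rw [← Equiv.prod_comp σ fun i => u (k.succAbove i), ← Finset.prod_smul]
  rfl

end SquareZeroExpansion

section Parity

variable {α : Type*} [DecidableEq α]

/-- The class of a multiset of indices in `(ℤ/2)^α`, recording the parity of each multiplicity. -/
def parity (K : Multiset α) : α → ZMod 2 := fun j => (K.count j : ZMod 2)

theorem parity_add (K L : Multiset α) : parity (K + L) = parity K + parity L := by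
  ext j
  simp [parity]

theorem parity_cons (a : α) (K : Multiset α) : parity (a ::ₘ K) = Pi.single a 1 + parity K := by
  ext j
  by_cases h : j = a <;> simp [parity, h, add_comm]

theorem sum_map_single_eq_parity (K : Multiset α) :
    (K.map fun j => (Pi.single j 1 : α → ZMod 2)).sum = parity K := by
  induction K using Multiset.induction_on with
  | empty => rfl
  | cons a K ih => rw [Multiset.map_cons, Multiset.sum_cons, ih, parity_cons]

theorem parity_two_nsmul (K : Multiset α) : parity (2 • K) = 0 := by
  ext j
  simp [parity, CharTwo.two_eq_zero]

theorem parity_univ [Fintype α] : parity (Finset.univ : Finset α).val = 1 := by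
  ext j
  simp [parity, Multiset.count_eq_one_of_mem Finset.univ.nodup (Finset.mem_univ j)]

theorem natCast_card_filter_parity_eq_one [Fintype α] (R : Type*) [Ring R] [CharP R 2]
    {J : Multiset α} (hJ : Odd J.card) :
    (({k | parity J k = 1} : Finset α).card : R) = 1 := by
  rw [← Multiset.sum_count_eq_card (s := Finset.univ) fun a _ => Finset.mem_univ a,
    Finset.odd_sum_iff_odd_card_odd] at hJ
  simp only [parity, ZMod.natCast_eq_one_iff_odd]
  exact natCast_eq_one_of_odd_of_two_eq_zero hJ CharTwo.two_eq_zero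

/-- The multiset in which every multiplicity of `K` is halved, rounding down: for `K = 2L + univ`
it recovers `L`. -/
noncomputable def halfMultiset (K : Multiset α) : Multiset α :=
  Finsupp.toMultiset ((Multiset.toFinsupp K).mapRange (· / 2) rfl)

theorem two_nsmul_halfMultiset_add_univ [Fintype α] {K : Multiset α} (hK : parity K = 1) :
    2 • halfMultiset K + Finset.univ.val = K := by
  ext j
  have hodd : Odd (K.count j) := ZMod.natCast_eq_one_iff_odd.1 (congrFun hK j)
  have huniv : Multiset.count j (Finset.univ : Finset α).val = 1 :=
    Multiset.count_eq_one_of_mem Finset.univ.nodup (Finset.mem_univ j)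
  have hhalf : (halfMultiset K).count j = K.count j / 2 := by
    simp [halfMultiset]
  rw [Multiset.count_add, Multiset.count_nsmul, hhalf, huniv]
  exact Nat.two_mul_div_two_add_one_of_odd hodd

theorem prod_map_eq_prod_map_halfMultiset_sq_mul [Fintype α] {M : Type*} [CommMonoid M]
    (f : α → M) {K : Multiset α} (hK : parity K = 1) :
    (K.map f).prod = ((halfMultiset K).map f).prod ^ 2 * ∏ j, f j := by
  conv_lhs => rw [← two_nsmul_halfMultiset_add_univ hK]
  rw [Multiset.map_add, Multiset.prod_add, Multiset.map_nsmul, Multiset.prod_nsmul]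
  rfl

theorem parity_val_eq_iff [Fintype α] (s : Finset α) (T : α → ZMod 2) :
    parity s.val = T ↔ s = ({j | T j ≠ 0} : Finset α) := by
  have mem_or_zero (j : α) : parity s.val j = if j ∈ s then 1 else 0 := by
    simp [parity, Multiset.count_eq_of_nodup s.nodup, apply_ite]
  constructor
  · rintro rfl
    ext j
    simp [mem_or_zero]
  · rintro rfl
    ext j
    have zero_or_one : ∀ x : ZMod 2, (if x ≠ 0 then 1 else 0) = x := by decide
    simpa only [mem_or_zero, Finset.mem_filter_univ] using zero_or_one (T j)

theorem prod_comp_mul_prod_map_eq [Fintype α] {ι M : Type*} [Fintype ι] [CommMonoid M] (f : α → M)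
    {I : ι → α} {J : Multiset α} (h : parity (Finset.univ.val.map I + J) = 1) :
    (∏ r, f (I r)) * (J.map f).prod =
      ((halfMultiset (Finset.univ.val.map I + J)).map f).prod ^ 2 * ∏ j, f j := by
  rw [← prod_map_eq_prod_map_halfMultiset_sq_mul f h, Multiset.map_add, Multiset.prod_add,
    Multiset.map_map]
  rfl

/-- The generator `t_j` of the group algebra `R[(ℤ/2)^α]`. -/
noncomputable def parityGen (R : Type*) [Semiring R] (j : α) : AddMonoidAlgebra R (α → ZMod 2) :=
  .single (Pi.single j 1) 1

theorem prod_map_parityGen (R : Type*) [CommSemiring R] (K : Multiset α) :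
    (K.map (parityGen R)).prod = .single (parity K) 1 := by
  induction K using Multiset.induction_on with
  | empty => rfl
  | cons a K ih =>
    rw [Multiset.map_cons, Multiset.prod_cons, ih, parityGen, AddMonoidAlgebra.single_mul_single,
      parity_cons, one_mul]

theorem parityGen_mul_self (R : Type*) [CommSemiring R] (j : α) :
    parityGen R j * parityGen R j = 1 := by
  rw [parityGen, AddMonoidAlgebra.single_mul_single, ← Pi.single_add, CharTwo.add_self_eq_zero,
    Pi.single_zero, one_mul, AddMonoidAlgebra.one_def]

theorem one_add_parityGen_mul_self (R : Type*) [CommRing R] [CharP R 2] (j : α) :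
    (1 + parityGen R j) * (1 + parityGen R j) = 0 := by
  have two_eq_zero : (2 : AddMonoidAlgebra R (α → ZMod 2)) = 0 := by
    rw [← map_ofNat (algebraMap R (AddMonoidAlgebra R (α → ZMod 2))) 2,
      CharTwo.two_eq_zero (R := R), map_zero]
  linear_combination parityGen_mul_self R j + (1 + parityGen R j) * two_eq_zero

theorem coeff_prod_one_add_parityGen [Fintype α] (R : Type*) [CommSemiring R] (s : Finset α)
    (T : α → ZMod 2) :
    (∏ j ∈ s, (1 + parityGen R j)).coeff T = if ∀ j ∉ s, T j = 0 then 1 else 0 := by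
  have monomial_eq (t : Finset α) :
      ∏ j ∈ t, parityGen R j = AddMonoidAlgebra.single (parity t.val) 1 :=
    prod_map_parityGen R t.val
  simp only [Finset.prod_one_add, monomial_eq, AddMonoidAlgebra.coeff_sum,
    Finsupp.finsetSum_apply, AddMonoidAlgebra.coeff_single, Finsupp.single_apply,
    parity_val_eq_iff, Finset.sum_ite_eq', Finset.mem_powerset]
  congr 1
  simp [Finset.subset_iff, not_imp_comm]

end Parity

section MaximalMinor

variable {R : Type*} [CommRing R] {n : ℕ}

/-- The maximal minor of an `n × (n + 1)` matrix obtained by deleting column `k`. -/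
def maximalMinor (A : Matrix (Fin n) (Fin (n + 1)) R) (k : Fin (n + 1)) : R :=
  (A.submatrix id k.succAbove).det

theorem sum_neg_one_pow_mul_maximalMinor_eq_zero (A : Matrix (Fin n) (Fin (n + 1)) R) (r : Fin n) :
    ∑ j : Fin (n + 1), (-1) ^ (j : ℕ) * A r j * maximalMinor A j = 0 := by
  let B : Matrix (Fin (n + 1)) (Fin (n + 1)) R := Matrix.of (Fin.cons (A r) A)
  have hB : B.det = 0 := Matrix.det_zero_of_row_eq (Fin.succ_ne_zero r).symm rfl
  rwa [Matrix.det_succ_row_zero] at hB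

theorem maximalMinor_mul_row (A : Matrix (Fin n) (Fin (n + 1)) R) (v : Fin (n + 1) → R)
    (k : Fin (n + 1)) :
    maximalMinor (Matrix.of fun r j => v j * A r j) k =
      (∏ i, v (k.succAbove i)) * maximalMinor A k :=
  Matrix.det_mul_row (fun i => v (k.succAbove i)) (A.submatrix id k.succAbove)

variable [CharP R 2]

theorem sum_prod_eq_sum_maximalMinor {B : Matrix (Fin n) (Fin (n + 1)) R}
    (hB : ∀ r, ∑ j, B r j = 0) (T : Fin (n + 1) → ZMod 2) :
    ∑ I : Fin n → Fin (n + 1) with parity (Finset.univ.val.map I) = T, ∏ r, B r (I r) =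
      ∑ k with T k = 0, maximalMinor B k := by
  have generating_function :
      ∑ I : Fin n → Fin (n + 1), AddMonoidAlgebra.single (parity (Finset.univ.val.map I))
        (∏ r, B r (I r)) =
      ∑ k, maximalMinor B k • ∏ j ∈ {k}ᶜ, (1 + parityGen R j) := by
    calc _ = ∏ r, ∑ j, B r j • parityGen R j := by
          rw [Fintype.prod_sum]
          refine Finset.sum_congr rfl fun I _ => ?_
          have monomial_eq : ∏ r, parityGen R (I r) =
              .single (parity (Finset.univ.val.map I)) 1 := by
            rw [← prod_map_parityGen, Multiset.map_map]
            rfl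
          rw [Finset.prod_smul, monomial_eq, AddMonoidAlgebra.smul_single, smul_eq_mul, mul_one]
      _ = ∏ r, ∑ j, B r j • (1 + parityGen R j) := by
          simp only [smul_add, Finset.sum_add_distrib, ← Finset.sum_smul, hB, zero_smul, zero_add]
      _ = _ := by
          rw [prod_sum_smul_eq_sum_permanent B (one_add_parityGen_mul_self R)]
          refine Finset.sum_congr rfl fun k _ => ?_
          rw [maximalMinor, det_eq_permanent_of_charTwo, ← Fin.image_succAbove_univ,
            Finset.prod_image Fin.succAbove_right_injective.injOn]
  have := congrArg (fun x => x.coeff T) generating_function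
  simpa [AddMonoidAlgebra.coeff_sum, Finsupp.single_apply, coeff_prod_one_add_parityGen,
    ← Finset.sum_filter] using this

theorem sum_prod_mul_maximalMinor_eq_card_mul (A : Matrix (Fin n) (Fin (n + 1)) R)
    (T : Fin (n + 1) → ZMod 2) :
    ∑ I : Fin n → Fin (n + 1) with parity (Finset.univ.val.map I) = T,
        ∏ r, maximalMinor A (I r) * A r (I r) =
      (({k | T k = 0} : Finset _).card : R) * ∏ j, maximalMinor A j := by
  have row_sum (r : Fin n) : ∑ j, maximalMinor A j * A r j = 0 := by
    simpa [CharTwo.neg_eq, mul_comm] using sum_neg_one_pow_mul_maximalMinor_eq_zero A r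
  have minor_eq (k : Fin (n + 1)) :
      maximalMinor (Matrix.of fun r j => maximalMinor A j * A r j) k = ∏ j, maximalMinor A j := by
    rw [maximalMinor_mul_row, mul_comm, ← Fin.prod_univ_succAbove]
  calc _ = ∑ k with T k = 0, maximalMinor (Matrix.of fun r j => maximalMinor A j * A r j) k :=
        sum_prod_eq_sum_maximalMinor row_sum T
    _ = _ := by simp only [minor_eq, Finset.sum_const, nsmul_eq_mul]

theorem prod_maximalMinor_eq_sum_sq_mul [IsDomain R] {A : Matrix (Fin n) (Fin (n + 1)) R}
    (hA : ∀ j, maximalMinor A j ≠ 0) {J : Multiset (Fin (n + 1))} (hJ : Odd J.card) :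
    (J.map (maximalMinor A)).prod =
      ∑ I : Fin n → Fin (n + 1) with parity (Finset.univ.val.map I + J) = 1,
        ((halfMultiset (Finset.univ.val.map I + J)).map (maximalMinor A)).prod ^ 2 *
          ∏ r, A r (I r) := by
  have compl_iff (I : Fin n → Fin (n + 1)) :
      parity (Finset.univ.val.map I) = 1 - parity J ↔
        parity (Finset.univ.val.map I + J) = 1 := by
    rw [eq_sub_iff_add_eq, parity_add]
  have card_eq_one : (({k | (1 - parity J) k = 0} : Finset (Fin (n + 1))).card : R) = 1 := by
    simp only [Pi.sub_apply, Pi.one_apply, sub_eq_zero, eq_comm (a := (1 : ZMod 2)),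
      natCast_card_filter_parity_eq_one R hJ]
  have expansion := sum_prod_mul_maximalMinor_eq_card_mul A (1 - parity J)
  simp only [compl_iff, card_eq_one, one_mul] at expansion
  apply mul_right_cancel₀ (Finset.prod_ne_zero_iff.2 fun j _ => hA j :
    ∏ j, maximalMinor A j ≠ 0)
  nth_rw 1 [← expansion]
  rw [Finset.sum_mul, Finset.mul_sum]
  refine Finset.sum_congr rfl fun I hI => ?_
  have square := prod_comp_mul_prod_map_eq (maximalMinor A) (Finset.mem_filter.1 hI).2
  rw [Finset.prod_mul_distrib]
  linear_combination (∏ r, A r (I r)) * square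

end MaximalMinor

section Derivative

variable {σ R : Type*}

theorem derivation_pow_char_mul {A : Type*} [CommSemiring R] [CommSemiring A] [Algebra R A] (p : ℕ)
    [CharP A p] (D : Derivation R A A) (a b : A) : D (a ^ p * b) = a ^ p * D b := by
  simp [Derivation.leibniz_pow]

/-- The differential operator `∂_{v₁} ⋯ ∂_{vₘ}` for a list `[v₁, …, vₘ]` of variables. -/
noncomputable def pderivList [CommSemiring R] (l : List σ) :
    Module.End R (MvPolynomial σ R) :=
  (l.map fun v => (pderiv v : Derivation R _ _).toLinearMap).prod

theorem pderivList_cons [CommSemiring R] (v : σ) (l : List σ) (f : MvPolynomial σ R) :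
    pderivList (v :: l) f = pderiv v (pderivList l f) := rfl

theorem pderivList_pow_char_mul [CommSemiring R] (p : ℕ) [CharP R p] (l : List σ)
    (f g : MvPolynomial σ R) : pderivList l (f ^ p * g) = f ^ p * pderivList l g := by
  induction l with
  | nil => rfl
  | cons v l ih => rw [pderivList_cons, ih, derivation_pow_char_mul, pderivList_cons]

theorem pderivList_monomial [CommSemiring R] {l : List σ} (hl : l.Nodup) (s : σ →₀ ℕ) (a : R) :
    pderivList l (monomial s a) =
      monomial (s - (l.map fun v => Finsupp.single v 1).sum)
        (a * (l.map fun v => (s v : R)).prod) := by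
  classical
  induction l with
  | nil => simp [pderivList]
  | cons v l ih =>
    obtain ⟨hv, hl⟩ := List.nodup_cons.1 hl
    have exponent_eq : (s - (l.map fun v => Finsupp.single v 1).sum : σ →₀ ℕ) v = s v := by
      have hsum : (l.map fun v => Finsupp.single v 1).sum v = 0 := by
        rw [← Finsupp.applyAddHom_apply, map_list_sum, List.map_map]
        refine List.sum_eq_zero fun x hx => ?_
        obtain ⟨u, hu, rfl⟩ := List.mem_map.1 hx
        exact Finsupp.single_eq_of_ne (ne_of_mem_of_not_mem hu hv).symm
      rw [Finsupp.tsub_apply, hsum, tsub_zero]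
    rw [pderivList_cons, ih hl, pderiv_monomial, exponent_eq, List.map_cons, List.sum_cons,
      List.map_cons, List.prod_cons, tsub_tsub, add_comm (Finsupp.single v 1), mul_assoc,
      mul_comm (s v : R)]

end Derivative

section Grading

variable {σ R M : Type*} [AddCommMonoid M] {w : σ → M}

theorem isWeightedHomogeneous_det [CommRing R] {m : Type*} [Fintype m] [DecidableEq m]
    {A : Matrix m m (MvPolynomial σ R)} {d : m → M}
    (hA : ∀ i j, IsWeightedHomogeneous w (A i j) (d j)) :
    IsWeightedHomogeneous w A.det (∑ j, d j) := by
  rw [Matrix.det_apply]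
  refine IsWeightedHomogeneous.sum _ _ _ fun τ _ => ?_
  have hprod := IsWeightedHomogeneous.prod Finset.univ (fun i => A (τ i) i) d fun i _ => hA _ i
  exact (weightedHomogeneousSubmodule R w _).smul_of_tower_mem (Equiv.Perm.sign τ) hprod

theorem isWeightedHomogeneous_multiset_prod [CommSemiring R] {ι : Type*}
    {f : ι → MvPolynomial σ R} {d : ι → M}
    (hf : ∀ i, IsWeightedHomogeneous w (f i) (d i)) (K : Multiset ι) :
    IsWeightedHomogeneous w (K.map f).prod (K.map d).sum := by
  induction K using Multiset.induction_on with
  | empty => exact isWeightedHomogeneous_one R w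
  | cons a K ih => simpa using (hf a).mul ih

end Grading

section GenericMatrix

variable {n : ℕ}

theorem Xdet15_ne_zero (j : Fin (n + 1)) : Xdet15 n j ≠ 0 := by
  have hrename : Xdet15 n j = rename (Prod.map id j.succAbove)
      (Matrix.mvPolynomialX (Fin n) (Fin n) (ZMod 2)).det := by
    rw [AlgHom.map_det, Xdet15]
    congr 1
    ext1 r c
    simp [genMat15]
  rw [hrename, ne_eq, map_eq_zero_iff _ (rename_injective _
    (Function.injective_id.prodMap Fin.succAbove_right_injective))]
  exact Matrix.det_mvPolynomialX_ne_zero _ _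

theorem XProd15_ne_zero (K : Multiset (Fin (n + 1))) : XProd15 n K ≠ 0 := by
  refine Multiset.prod_ne_zero fun h => ?_
  obtain ⟨j, -, hj⟩ := Multiset.mem_map.1 h
  exact Xdet15_ne_zero j hj

theorem XProd15_add (K L : Multiset (Fin (n + 1))) :
    XProd15 n (K + L) = XProd15 n K * XProd15 n L := by
  simp [XProd15]

theorem prod_Xdet15_comp (I : Fin n → Fin (n + 1)) :
    ∏ r, Xdet15 n (I r) = XProd15 n (Finset.univ.val.map I) := by
  rw [XProd15, Multiset.map_map]
  rfl

/-- The multigrading `deg a_{i,j} = e_j` with degrees reduced modulo 2. -/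
def columnDegree (v : Fin n × Fin (n + 1)) : Fin (n + 1) → ZMod 2 := Pi.single v.2 1

theorem isWeightedHomogeneous_Xdet15 (k : Fin (n + 1)) :
    IsWeightedHomogeneous columnDegree (Xdet15 n k) (1 - Pi.single k 1) := by
  have hdet := isWeightedHomogeneous_det (R := ZMod 2) (w := columnDegree)
    (A := (genMat15 n).submatrix id k.succAbove) (d := fun i => Pi.single (k.succAbove i) 1)
    fun i j => isWeightedHomogeneous_X _ _ (i, k.succAbove j)
  have hdeg : ∑ i, (Pi.single (k.succAbove i) 1 : Fin (n + 1) → ZMod 2) = 1 - Pi.single k 1 := by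
    rw [eq_sub_iff_add_eq', ← Fin.sum_univ_succAbove (fun j => Pi.single j (1 : ZMod 2))]
    exact Finset.univ_sum_single 1
  rwa [hdeg] at hdet

theorem isWeightedHomogeneous_XProd15 (K : Multiset (Fin (n + 1))) :
    IsWeightedHomogeneous columnDegree (XProd15 n K) (K.card • 1 - parity K) := by
  have hprod := isWeightedHomogeneous_multiset_prod (isWeightedHomogeneous_Xdet15 (n := n)) K
  rwa [Multiset.sum_map_sub, Multiset.map_const', Multiset.sum_replicate,
    sum_map_single_eq_parity] at hprod

theorem parity_eq_one_of_mul_eq {I : Fin n → Fin (n + 1)} {J L : Multiset (Fin (n + 1))}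
    (hJ : Odd J.card)
    (h : (∏ r, Xdet15 n (I r)) * XProd15 n J = XProd15 n L ^ 2 * ∏ j, Xdet15 n j) :
    parity (Finset.univ.val.map I + J) = 1 := by
  have hprod : XProd15 n (Finset.univ.val.map I + J) =
      XProd15 n (2 • L + Finset.univ.val) := by
    rw [XProd15_add, ← prod_Xdet15_comp, h, two_nsmul, XProd15_add, XProd15_add, sq]
    rfl
  have hdeg := (isWeightedHomogeneous_XProd15 (Finset.univ.val.map I + J)).inj_right
    (XProd15_ne_zero _) (hprod ▸ isWeightedHomogeneous_XProd15 (2 • L + Finset.univ.val))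
  have two_eq_zero : (2 : Fin (n + 1) → ZMod 2) = 0 := CharTwo.two_eq_zero
  have card_eq_one : (J.card : Fin (n + 1) → ZMod 2) = 1 :=
    natCast_eq_one_of_odd_of_two_eq_zero hJ two_eq_zero
  simp only [parity_add (2 • L), parity_two_nsmul, parity_univ, Multiset.card_add,
    Multiset.card_nsmul, Multiset.card_map, Finset.card_val, Finset.card_univ, Fintype.card_fin,
    nsmul_eq_mul, mul_one, Nat.cast_add, Nat.cast_mul, Nat.cast_ofNat, Nat.cast_one] at hdeg
  linear_combination card_eq_one - hdeg - (L.card : Fin (n + 1) → ZMod 2) * two_eq_zero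

theorem pderivI15_eq_pderivList (I : Fin n → Fin (n + 1))
    (f : MvPolynomial (Fin n × Fin (n + 1)) (ZMod 2)) :
    pderivI15 n I f = pderivList (List.ofFn fun r => (r, I r)) f := by
  rw [pderivI15]
  induction List.ofFn fun r => (r, I r) with
  | nil => rfl
  | cons v l ih => rw [List.foldr_cons, ih, pderivList_cons]

theorem pderivList_ofFn_prod_X (I I' : Fin n → Fin (n + 1)) :
    pderivList (List.ofFn fun r => (r, I r)) (∏ r, genMat15 n r (I' r)) =
      if I' = I then 1 else 0 := by
  have nodup : (List.ofFn fun r => (r, I r)).Nodup :=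
    List.nodup_ofFn.2 fun r s h => congrArg Prod.fst h
  have monomial_eq : ∏ r, genMat15 n r (I' r) =
      monomial (∑ r, Finsupp.single (r, I' r) 1) (1 : ZMod 2) := by
    simp [genMat15, X, monomial_sum_one]
  have exponent_eq (r : Fin n) : (∑ q, Finsupp.single (q, I' q) 1 : _ →₀ ℕ) (r, I r) =
      if I' r = I r then 1 else 0 := by
    rw [Finsupp.finsetSum_apply, Finset.sum_eq_single r]
    · simp [Finsupp.single_apply]
    · exact fun q _ hq => Finsupp.single_eq_of_ne fun h => hq (congrArg Prod.fst h).symm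
    · simp
  rw [monomial_eq, pderivList_monomial nodup, List.map_ofFn, List.map_ofFn, List.sum_ofFn,
    List.prod_ofFn]
  simp only [Function.comp_apply, exponent_eq]
  split_ifs with h
  · simp [h]
  · obtain ⟨r, hr⟩ := Function.ne_iff.1 h
    have hzero : ∏ r, ((if I' r = I r then 1 else 0 : ℕ) : ZMod 2) = 0 :=
      Finset.prod_eq_zero (Finset.mem_univ r) (by simp [hr])
    rw [hzero, mul_zero, monomial_zero]

theorem pderivI15_XProd15 (I : Fin n → Fin (n + 1)) {J : Multiset (Fin (n + 1))}
    (hJ : Odd J.card) :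
    pderivI15 n I (XProd15 n J) =
      if parity (Finset.univ.val.map I + J) = 1 then
        XProd15 n (halfMultiset (Finset.univ.val.map I + J)) ^ 2 else 0 := by
  have expansion := prod_maximalMinor_eq_sum_sq_mul (A := genMat15 n) Xdet15_ne_zero hJ
  change XProd15 n J = ∑ I' ∈ _, XProd15 n _ ^ 2 * _ at expansion
  rw [pderivI15_eq_pderivList, expansion, map_sum]
  simp only [pderivList_pow_char_mul, pderivList_ofFn_prod_X, mul_ite, mul_one, mul_zero,
    Finset.sum_ite_eq', Finset.mem_filter, Finset.mem_univ, true_and]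

end GenericMatrix

/-- Papadakis–Petrotou determinant identity over `𝔽₂`:
for `I` with `n` components and `J` of odd length, if
`X_I · X_J = X_L² · X_0 X_1 ⋯ X_n` then `∂_I X_J = X_L²`, and if no such `L` exists,
then `∂_I X_J = 0`. -/
theorem stmt_15 (n : ℕ) (I : Fin n → Fin (n + 1)) (J : Multiset (Fin (n + 1)))
    (hJ : Odd (Multiset.card J)) :
    (∀ L : Multiset (Fin (n + 1)),
      (∏ r : Fin n, Xdet15 n (I r)) * XProd15 n J =
        (XProd15 n L) ^ 2 * ∏ j : Fin (n + 1), Xdet15 n j →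
      pderivI15 n I (XProd15 n J) = (XProd15 n L) ^ 2) ∧
    ((¬ ∃ L : Multiset (Fin (n + 1)),
      (∏ r : Fin n, Xdet15 n (I r)) * XProd15 n J =
        (XProd15 n L) ^ 2 * ∏ j : Fin (n + 1), Xdet15 n j) →
      pderivI15 n I (XProd15 n J) = 0) := by
  have hX : ∏ j, Xdet15 n j ≠ 0 := Finset.prod_ne_zero_iff.2 fun j _ => Xdet15_ne_zero j
  have half_spec (h : parity (Finset.univ.val.map I + J) = 1) :
      (∏ r, Xdet15 n (I r)) * XProd15 n J =
        XProd15 n (halfMultiset (Finset.univ.val.map I + J)) ^ 2 * ∏ j, Xdet15 n j :=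
    prod_comp_mul_prod_map_eq (Xdet15 n) h
  rw [pderivI15_XProd15 I hJ]
  constructor
  · intro L hL
    have h := parity_eq_one_of_mul_eq hJ hL
    rw [if_pos h]
    exact mul_right_cancel₀ hX ((half_spec h).symm.trans hL)
  · intro hno
    exact if_neg fun h => hno ⟨_, half_spec h⟩
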